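/- arXiv:2412.17167 — 5 statements merged into one kernel-verified Lean document; each statement's English description precedes it below -/
import Mathlib

section
/- (Kawamura's embedding, relations form.) Let n ≥ 2, k ≥ 1 and m := k(n−1)+1. Let A be a unital C*-algebra and let (S_1, …, S_n) be a Cuntz family of n isometries in A. Define elements T_1, …, T_m of A by: T_{j + l(n−1)} := S_n^l S_j for 1 ≤ j ≤ n−1 and 0 ≤ l ≤ k−1, and T_m := S_n^k. Then (T_1, …, T_m) is a Cuntz family of m isometries in A, i.e., T_a* T_b = δ_{ab}·1 for all a, b and ∑_{a=1}^m T_a T_a* = 1. -/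
/-!
Replacing one member `w` of a Cuntz family by `w * S₁, …, w * S_q`, for a second Cuntz family `S`,
gives a Cuntz family again: the range projection `w w*` is split into the pieces `w Sⱼ Sⱼ* w*`.
The elements `T` are obtained from the one-member family `1` by doing this `k` times to the last
member, which is `(S n)^l` after `l` replacements.
-/

open Finset

section CuntzFamily

variable {A ι κ : Type*} [Semiring A] [StarRing A] [DecidableEq ι] [DecidableEq κ]

/-- A finite Cuntz family: isometries `S i`, `i ∈ s`, with orthogonal range projections
`S i * star (S i)` that sum to `1`. The index set is a `Finset`, so that `Icc 1 n` serves for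
families of `n` isometries; the values of `S` outside `s` are arbitrary. -/
structure IsCuntzFamily (s : Finset ι) (S : ι → A) : Prop where
  star_mul_eq_ite : ∀ i ∈ s, ∀ j ∈ s, star (S i) * S j = if i = j then 1 else 0
  sum_mul_star : ∑ i ∈ s, S i * star (S i) = 1

theorem IsCuntzFamily.star_mul_self_eq_one {s : Finset ι} {S : ι → A} (hS : IsCuntzFamily s S)
    {i : ι} (hi : i ∈ s) : star (S i) * S i = 1 := by
  rw [hS.star_mul_eq_ite i hi i hi, if_pos rfl]

theorem IsCuntzFamily.star_mul_eq_zero {s : Finset ι} {S : ι → A} (hS : IsCuntzFamily s S)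
    {i j : ι} (hi : i ∈ s) (hj : j ∈ s) (hij : i ≠ j) : star (S i) * S j = 0 := by
  rw [hS.star_mul_eq_ite i hi j hj, if_neg hij]

theorem isCuntzFamily_singleton {i : ι} {S : ι → A} :
    IsCuntzFamily {i} S ↔ S i ∈ unitary A := by
  refine ⟨fun h ↦ ⟨?_, ?_⟩, fun h ↦ ⟨?_, ?_⟩⟩
  · exact h.star_mul_self_eq_one (mem_singleton_self i)
  · simpa using h.sum_mul_star
  · simpa using h.1
  · simpa using h.2

theorem IsCuntzFamily.graft {s : Finset ι} {t : Finset κ} {i₀ : ι} {f : κ ↪ ι} {T U : ι → A}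
    {S : κ → A} (hi₀ : i₀ ∉ s) (hst : Disjoint s (t.map f))
    (hT : IsCuntzFamily (s.cons i₀ hi₀) T) (hS : IsCuntzFamily t S)
    (hUT : ∀ i ∈ s, U i = T i) (hUS : ∀ j ∈ t, U (f j) = T i₀ * S j) :
    IsCuntzFamily (s.disjUnion (t.map f) hst) U := by
  have hUf (i) (hi : i ∈ s) (j) (hj : j ∈ t) : star (U i) * U (f j) = 0 := by
    have hTi : star (T i) * T i₀ = 0 := hT.star_mul_eq_zero (mem_cons_of_mem hi)
      (mem_cons_self i₀ s) (ne_of_mem_of_not_mem hi hi₀)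
    rw [hUT i hi, hUS j hj, ← mul_assoc, hTi, zero_mul]
  have hne {i j} (hi : i ∈ s) (hj : j ∈ t) : i ≠ f j :=
    hst.forall_ne_finset hi (mem_map_of_mem f hj)
  constructor
  · simp only [mem_disjUnion, mem_map]
    rintro _ (hi | ⟨i, hi, rfl⟩) _ (hj | ⟨j, hj, rfl⟩)
    · rw [hUT _ hi, hUT _ hj, hT.star_mul_eq_ite _ (mem_cons_of_mem hi) _ (mem_cons_of_mem hj)]
    · rw [hUf _ hi j hj, if_neg (hne hi hj)]
    · rw [← star_star (star _ * _), star_mul, star_star, hUf _ hj i hi, star_zero,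
        if_neg (hne hj hi).symm]
    · simp only [hUS i hi, hUS j hj, f.injective.eq_iff]
      rw [star_mul, mul_assoc, ← mul_assoc (star (T i₀)),
        hT.star_mul_self_eq_one (mem_cons_self i₀ s), one_mul, hS.star_mul_eq_ite i hi j hj]
  · have hsum_t : ∑ j ∈ t, U (f j) * star (U (f j)) = T i₀ * star (T i₀) := calc
      _ = ∑ j ∈ t, T i₀ * (S j * star (S j)) * star (T i₀) :=
        sum_congr rfl fun j hj ↦ by simp only [hUS j hj, star_mul, mul_assoc]
      _ = T i₀ * star (T i₀) := by rw [← sum_mul, ← mul_sum, hS.sum_mul_star, mul_one]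
    have hsum_s : ∑ i ∈ s, U i * star (U i) = ∑ i ∈ s, T i * star (T i) :=
      sum_congr rfl fun i hi ↦ by rw [hUT i hi]
    rw [sum_disjUnion, sum_map, hsum_s, hsum_t, add_comm, ← hT.sum_mul_star, sum_cons]

theorem IsCuntzFamily.graft_Icc {S T U : ℕ → A} {N q : ℕ}
    (hT : IsCuntzFamily (Icc 1 (N + 1)) T) (hS : IsCuntzFamily (Icc 1 q) S)
    (hUT : ∀ a ∈ Icc 1 N, U a = T a) (hUS : ∀ b ∈ Icc 1 q, U (N + b) = T (N + 1) * S b) :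
    IsCuntzFamily (Icc 1 (N + q)) U := by
  have hN : N + 1 ∉ Icc 1 N := by simp
  have hdisj : Disjoint (Icc 1 N) ((Icc 1 q).map (addLeftEmbedding N)) := by
    rw [map_add_left_Icc, disjoint_left]
    intro a
    simp only [mem_Icc]
    omega
  have hcons : Icc 1 (N + 1) = (Icc 1 N).cons (N + 1) hN := by
    ext a
    simp only [mem_Icc, mem_cons]
    omega
  have hunion : Icc 1 (N + q) = (Icc 1 N).disjUnion _ hdisj := by
    ext a
    simp only [map_add_left_Icc, mem_disjUnion, mem_Icc]
    omega
  rw [hunion]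
  exact (hcons ▸ hT).graft hN hdisj hS hUT hUS

theorem kawamura_family_is_cuntz_general {p k : ℕ} {S T : ℕ → A}
    (hS : IsCuntzFamily (Icc 1 (p + 1)) S)
    (hT : ∀ j ∈ Icc 1 p, ∀ l < k, T (j + l * p) = S (p + 1) ^ l * S j)
    (hT_last : T (k * p + 1) = S (p + 1) ^ k) :
    IsCuntzFamily (Icc 1 (k * p + 1)) T := by
  induction k generalizing T with
  | zero =>
    rw [zero_mul, zero_add, pow_zero] at hT_last
    rw [zero_mul, zero_add, Icc_self, isCuntzFamily_singleton, hT_last]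
    exact one_mem _
  | succ k ih =>
    have hlt (j) (hj : j ∈ Icc 1 p) (l) (hl : l < k) : j + l * p < k * p + 1 := calc
      j + l * p ≤ p + l * p := Nat.add_le_add_right (mem_Icc.1 hj).2 _
      _ = (l + 1) * p := by ring
      _ ≤ k * p := Nat.mul_le_mul_right p hl
      _ < k * p + 1 := Nat.lt_succ_self _
    have hcut : IsCuntzFamily (Icc 1 (k * p + 1))
        (Function.update T (k * p + 1) (S (p + 1) ^ k)) := by
      refine ih (fun j hj l hl ↦ ?_) (Function.update_self ..)
      rw [Function.update_of_ne (hlt j hj l hl).ne, hT j hj l (hl.trans k.lt_succ_self)]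
    rw [add_one_mul, add_assoc]
    refine hcut.graft_Icc hS (fun a ha ↦ ?_) fun b hb ↦ ?_
    · rw [Function.update_of_ne (Nat.lt_succ_of_le (mem_Icc.1 ha).2).ne]
    · rw [Function.update_self]
      obtain ⟨hb_pos, hb_le⟩ := mem_Icc.1 hb
      obtain hb_le | rfl := Nat.le_add_one_iff.1 hb_le
      · rw [add_comm, hT b (mem_Icc.2 ⟨hb_pos, hb_le⟩) k k.lt_succ_self]
      · rw [← add_assoc, ← add_one_mul, hT_last, pow_succ]

end CuntzFamily

/-- Kawamura's embedding, relations form.  Given a Cuntz family `S 1, …, S n` of `n` isometries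
in a unital C*-algebra `A` and `m = k (n-1) + 1`, the elements
`T (j + l (n-1)) = (S n)^l * S j` (for `1 ≤ j ≤ n-1`, `0 ≤ l ≤ k-1`) and `T m = (S n)^k`
form a Cuntz family of `m` isometries in `A`. -/
theorem kawamura_family_is_cuntz
    {A : Type*} [CStarAlgebra A] (n k m : ℕ) (hn : 2 ≤ n) (hk : 1 ≤ k)
    (hm : m = k * (n - 1) + 1)
    (S T : ℕ → A)
    (hS1 : ∀ i ∈ Finset.Icc 1 n, ∀ j ∈ Finset.Icc 1 n,
      star (S i) * S j = if i = j then 1 else 0)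
    (hS2 : ∑ i ∈ Finset.Icc 1 n, S i * star (S i) = 1)
    (hT1 : ∀ j l : ℕ, 1 ≤ j → j ≤ n - 1 → l ≤ k - 1 →
      T (j + l * (n - 1)) = S n ^ l * S j)
    (hT2 : T m = S n ^ k) :
    (∀ a ∈ Finset.Icc 1 m, ∀ b ∈ Finset.Icc 1 m,
      star (T a) * T b = if a = b then 1 else 0) ∧
    ∑ a ∈ Finset.Icc 1 m, T a * star (T a) = 1 := by
  obtain ⟨p, rfl⟩ := Nat.exists_eq_add_of_le' (one_le_two.trans hn)
  subst hm
  obtain ⟨h_star, h_sum⟩ := kawamura_family_is_cuntz_general ⟨hS1, hS2⟩ (fun j hj l hl ↦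
    hT1 j l (mem_Icc.1 hj).1 (mem_Icc.1 hj).2 (Nat.le_pred_of_lt hl)) hT2
  exact ⟨h_star, h_sum⟩
end

section
/- Let n ≥ 2 and k ≥ 1, and set m := k(n−1)+1. Consider the following m words over the alphabet {1, …, n}: w_{l,j} := n^l j (the letter n repeated l times followed by the letter j) for 0 ≤ l ≤ k−1 and 1 ≤ j ≤ n−1, together with w_m := n^k (the letter n repeated k times). Then: (i) these m words are pairwise distinct and no one of them is a prefix of another; (ii) every word over {1, …, n} of length at least k has exactly one of these m words as a prefix. In other words, they form a maximal (complete) prefix code of size m. -/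
/-!
Let `a` be the repeated letter and `S` the set of the other letters. A codeword for `k + 1` is
either a single letter of `S`, or `a` followed by a codeword for `k`. Since `a ∉ S`, the first
letter tells the two kinds apart, so cardinality, prefix-freeness and completeness all pass from
`k` to `k + 1`.
-/

theorem eq_of_isAntichain_prefix_of_prefix {α : Type*} {C : Set (List α)}
    (hC : IsAntichain (· <+: ·) C) {u v w : List α} (hu : u ∈ C) (hv : v ∈ C)
    (huw : u <+: w) (hvw : v <+: w) : u = v :=
  (List.prefix_or_prefix_of_prefix huw hvw).elim (hC.eq hu hv) (hC.eq' hu hv)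

/-- Kawamura's code over an arbitrary alphabet: the words `a ^ l b` with `l < k` and `b ∈ S`,
together with `a ^ k`. The words of the paper are the case `a = n`, `S = {1, …, n - 1}`. -/
def kawamuraCode {α : Type*} (a : α) (S : Set α) (k : ℕ) : Set (List α) :=
  {w | (∃ l < k, ∃ b ∈ S, w = List.replicate l a ++ [b]) ∨ w = List.replicate k a}

section kawamuraCode

variable {α : Type*} {a : α} {S : Set α}

theorem kawamuraCode_zero : kawamuraCode a S 0 = {[]} := by
  simp [kawamuraCode]

theorem kawamuraCode_succ (k : ℕ) :
    kawamuraCode a S (k + 1) = (fun b ↦ [b]) '' S ∪ List.cons a '' kawamuraCode a S k := by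
  ext w
  constructor
  · rintro (⟨_ | l, hl, b, hb, rfl⟩ | rfl)
    · exact .inl ⟨b, hb, rfl⟩
    · exact .inr ⟨_, .inl ⟨l, Nat.lt_of_succ_lt_succ hl, b, hb, rfl⟩, rfl⟩
    · exact .inr ⟨_, .inr rfl, rfl⟩
  · rintro (⟨b, hb, rfl⟩ | ⟨_, ⟨l, hl, b, hb, rfl⟩ | rfl, rfl⟩)
    · exact .inl ⟨0, k.succ_pos, b, hb, rfl⟩
    · exact .inl ⟨l + 1, Nat.succ_lt_succ hl, b, hb, rfl⟩
    · exact .inr rfl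

theorem encard_kawamuraCode (ha : a ∉ S) (k : ℕ) :
    (kawamuraCode a S k).encard = k * S.encard + 1 := by
  induction k with
  | zero => simp [kawamuraCode_zero]
  | succ k ih =>
    have hdisj : Disjoint ((fun b ↦ [b]) '' S) (List.cons a '' kawamuraCode a S k) := by
      rw [Set.disjoint_left]
      rintro _ ⟨b, hb, rfl⟩ ⟨u, -, hu⟩
      exact ha ((List.cons.inj hu).1 ▸ hb)
    rw [kawamuraCode_succ, Set.encard_union_eq hdisj, List.singleton_injective.encard_image,
      List.cons_injective.encard_image, ih]
    push_cast
    ring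

theorem isAntichain_prefix_kawamuraCode (ha : a ∉ S) (k : ℕ) :
    IsAntichain (· <+: ·) (kawamuraCode a S k) := by
  induction k with
  | zero => simp only [kawamuraCode_zero, IsAntichain.singleton]
  | succ k ih =>
    rw [kawamuraCode_succ, isAntichain_union]
    refine ⟨?_, ih.image _ fun u v h ↦ (List.cons_prefix_cons.1 h).2, ?_⟩
    · rintro _ ⟨b, -, rfl⟩ _ ⟨c, -, rfl⟩ hne h
      exact hne (congrArg ([·]) (List.cons_prefix_cons.1 h).1)
    · rintro _ ⟨b, hb, rfl⟩ _ ⟨u, -, rfl⟩ -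
      have hba : b ≠ a := fun h ↦ ha (h ▸ hb)
      exact ⟨fun h ↦ hba (List.cons_prefix_cons.1 h).1,
        fun h ↦ hba (List.cons_prefix_cons.1 h).1.symm⟩

theorem exists_mem_kawamuraCode_prefix {k : ℕ} {w : List α} (hw : ∀ x ∈ w, x ∈ insert a S)
    (hk : k ≤ w.length) : ∃ u ∈ kawamuraCode a S k, u <+: w := by
  induction k generalizing w with
  | zero => exact ⟨[], by simp [kawamuraCode_zero], List.nil_prefix⟩
  | succ k ih =>
    obtain ⟨x, w, rfl⟩ := List.exists_cons_of_length_pos (k.succ_pos.trans_le hk)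
    obtain ⟨hx, hw⟩ := List.forall_mem_cons.1 hw
    rw [kawamuraCode_succ]
    obtain rfl | hxS := hx
    · obtain ⟨u, hu, huw⟩ := ih hw (Nat.le_of_succ_le_succ hk)
      exact ⟨x :: u, .inr ⟨u, hu, rfl⟩, List.cons_prefix_cons.2 ⟨rfl, huw⟩⟩
    · exact ⟨[x], .inl ⟨x, hxS, rfl⟩, List.cons_prefix_cons.2 ⟨rfl, List.nil_prefix⟩⟩

theorem kawamura_words_maximal_prefix_code_general (ha : a ∉ S) (k : ℕ) :
    (kawamuraCode a S k).encard = k * S.encard + 1 ∧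
    IsAntichain (· <+: ·) (kawamuraCode a S k) ∧
    ∀ w : List α, (∀ x ∈ w, x ∈ insert a S) → k ≤ w.length →
      ∃! u, u ∈ kawamuraCode a S k ∧ u <+: w := by
  have hanti := isAntichain_prefix_kawamuraCode ha k
  refine ⟨encard_kawamuraCode ha k, hanti, fun w hw hk ↦ ?_⟩
  obtain ⟨u, hu, huw⟩ := exists_mem_kawamuraCode_prefix hw hk
  exact ⟨u, ⟨hu, huw⟩, fun v ⟨hv, hvw⟩ ↦
    eq_of_isAntichain_prefix_of_prefix hanti hv hu hvw huw⟩

end kawamuraCode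

theorem kawamuraCode_Icc_eq_setOf (n : ℕ) {k : ℕ} (hk : 1 ≤ k) :
    kawamuraCode n (Set.Icc 1 (n - 1)) k =
      {w | (∃ l j : ℕ, l ≤ k - 1 ∧ 1 ≤ j ∧ j ≤ n - 1 ∧
        w = List.replicate l n ++ [j]) ∨ w = List.replicate k n} := by
  ext w
  simp [kawamuraCode, Nat.le_sub_one_iff_lt hk, and_assoc]

theorem encard_Icc_nat (a b : ℕ) : (Set.Icc a b).encard = (b + 1 - a : ℕ) := by
  rw [← (Set.finite_Icc a b).cast_ncard_eq, Set.ncard_Icc_nat]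

/-- The `m = k(n-1)+1` words `n^l j` (`0 ≤ l ≤ k-1`, `1 ≤ j ≤ n-1`) and `n^k` over the
alphabet `{1, …, n}` form a maximal prefix code of size `m`: they are pairwise distinct, none
is a proper prefix of another, and every word of length at least `k` over the alphabet has
exactly one of them as a prefix. -/
theorem kawamura_words_maximal_prefix_code
    (n k m : ℕ) (hn : 2 ≤ n) (hk : 1 ≤ k) (hm : m = k * (n - 1) + 1)
    (C : Set (List ℕ))
    (hC : C = {w | (∃ l j : ℕ, l ≤ k - 1 ∧ 1 ≤ j ∧ j ≤ n - 1 ∧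
        w = List.replicate l n ++ [j]) ∨ w = List.replicate k n}) :
    C.ncard = m ∧
    (∀ u ∈ C, ∀ v ∈ C, u <+: v → u = v) ∧
    (∀ w : List ℕ, (∀ x ∈ w, x ∈ Finset.Icc 1 n) → k ≤ w.length →
      ∃! u, u ∈ C ∧ u <+: w) := by
  obtain rfl := hC.trans (kawamuraCode_Icc_eq_setOf n hk).symm
  have hnotMem : n ∉ Set.Icc 1 (n - 1) := by rw [Set.mem_Icc]; omega
  have hinsert : insert n (Set.Icc 1 (n - 1)) = Set.Icc 1 n :=
    Set.insert_Icc_pred_right_eq_Icc (one_le_two.trans hn)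
  obtain ⟨hcard, hanti, hcomplete⟩ := kawamura_words_maximal_prefix_code_general hnotMem k
  refine ⟨?_, fun u hu v hv ↦ hanti.eq hu hv, by simpa [hinsert] using hcomplete⟩
  rw [encard_Icc_nat, Nat.add_sub_cancel] at hcard
  rw [Set.ncard_def, hcard, hm]
  exact_mod_cast ENat.toNat_natCast (k * (n - 1) + 1)
end

section
/- Let C be a finite set of nonempty words over the alphabet {1, …, n} (n ≥ 2) such that no word of C is a prefix of another word of C, and such that every word over {1, …, n} of length N has a prefix in C, where N is the maximal length of a word in C. Let A be a unital C*-algebra and (S_1, …, S_n) a Cuntz family of n isometries in A. For a word w = (i_1, …, i_r) write S_w := S_{i_1} ⋯ S_{i_r}. Then S_u* S_v = δ_{uv}·1 for all u, v ∈ C, and ∑_{w ∈ C} S_w S_w* = 1; that is, (S_w)_{w ∈ C} is a Cuntz family of |C| isometries in A. -/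
/-!
Write `S_w` for the product of the `S i` along the word `w`. Cancelling common first letters reduces
`star S_u * S_v` to the relations between letters, so incomparable words give orthogonal isometries.
If `P` is the sum of the range projections of the code words, then `P * S_u = S_u` for `u ∈ C`,
hence `P * S_w = S_w` for every word `w` having a prefix in `C`. As all words of a suitable length
have such a prefix, and an element is determined by its products with the `S_w` of a given length,
this forces `P = 1`.
-/

section CuntzFamily

variable {A ι : Type*}

section SumMulEqOne

variable [Semiring A] {I : Finset ι} {S T : ι → A}

theorem eq_of_forall_mul_eq_of_sum_mul_eq_one (hST : ∑ i ∈ I, S i * T i = 1) {a b : A}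
    (h : ∀ i ∈ I, a * S i = b * S i) : a = b := by
  calc a = ∑ i ∈ I, a * S i * T i := by
        simp only [mul_assoc, ← Finset.mul_sum, hST, mul_one]
    _ = ∑ i ∈ I, b * S i * T i := Finset.sum_congr rfl fun i hi => by rw [h i hi]
    _ = b := by simp only [mul_assoc, ← Finset.mul_sum, hST, mul_one]

theorem eq_of_forall_mul_prod_map_eq_of_sum_mul_eq_one (hST : ∑ i ∈ I, S i * T i = 1) {a b : A}
    (k : ℕ) (h : ∀ w : List ι, (∀ x ∈ w, x ∈ I) → w.length = k →
      a * (w.map S).prod = b * (w.map S).prod) : a = b := by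
  induction k with
  | zero => simpa using h [] (by simp) rfl
  | succ k ih =>
    refine ih fun w hw hwk => eq_of_forall_mul_eq_of_sum_mul_eq_one hST fun i hi => ?_
    have hwi : ∀ x ∈ w ++ [i], x ∈ I := by simpa [or_imp, forall_and, hi] using hw
    simpa [mul_assoc] using h (w ++ [i]) hwi (by simp [hwk])

end SumMulEqOne

variable [DecidableEq ι]

/-- A Toeplitz–Cuntz family: isometries `S i`, for `i ∈ I`, with mutually orthogonal ranges. Values
of `S` outside `I` are unconstrained. It carries the part of the Cuntz relations that makes sense
for infinite `I` and without addition. -/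
structure IsToeplitzCuntzFamily [MonoidWithZero A] [StarMul A] (I : Set ι) (S : ι → A) : Prop where
  star_mul_eq_ite : ∀ i ∈ I, ∀ j ∈ I, star (S i) * S j = if i = j then 1 else 0

/-- A Cuntz family indexed by the finite set `I`: a Toeplitz–Cuntz family whose range projections
sum to `1`. -/
structure IsCuntzFamily_s4 [Semiring A] [StarMul A] (I : Finset ι) (S : ι → A) : Prop
    extends IsToeplitzCuntzFamily (I : Set ι) S where
  sum_mul_star : ∑ i ∈ I, S i * star (S i) = 1

namespace IsToeplitzCuntzFamily

section MonoidWithZero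

variable [MonoidWithZero A] [StarMul A] {I : Set ι} {S : ι → A}

theorem star_prod_map_cons_mul_prod_map_cons (hS : IsToeplitzCuntzFamily I S) {i j : ι}
    (hi : i ∈ I) (hj : j ∈ I) (u v : List ι) :
    star ((i :: u).map S).prod * ((j :: v).map S).prod =
      if i = j then star (u.map S).prod * (v.map S).prod else 0 := by
  calc star ((i :: u).map S).prod * ((j :: v).map S).prod
      = star (u.map S).prod * (star (S i) * S j) * (v.map S).prod := by
        simp only [List.map_cons, List.prod_cons, star_mul, mul_assoc]
    _ = if i = j then star (u.map S).prod * (v.map S).prod else 0 := by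
        rw [hS.star_mul_eq_ite i hi j hj]
        split_ifs <;> simp

theorem star_prod_map_mul_self (hS : IsToeplitzCuntzFamily I S) {u : List ι}
    (hu : ∀ x ∈ u, x ∈ I) : star (u.map S).prod * (u.map S).prod = 1 := by
  induction u with
  | nil => simp
  | cons i u ih =>
    obtain ⟨hi, hu⟩ := List.forall_mem_cons.mp hu
    rw [hS.star_prod_map_cons_mul_prod_map_cons hi hi, if_pos rfl, ih hu]

theorem star_prod_map_mul_eq_zero (hS : IsToeplitzCuntzFamily I S) {u v : List ι}
    (hu : ∀ x ∈ u, x ∈ I) (hv : ∀ x ∈ v, x ∈ I) (huv : ¬u <+: v) (hvu : ¬v <+: u) :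
    star (u.map S).prod * (v.map S).prod = 0 := by
  induction u generalizing v with
  | nil => exact absurd v.nil_prefix huv
  | cons i u ih =>
    cases v with
    | nil => exact absurd (i :: u).nil_prefix hvu
    | cons j v =>
      obtain ⟨hi, hu'⟩ := List.forall_mem_cons.mp hu
      obtain ⟨hj, hv'⟩ := List.forall_mem_cons.mp hv
      rw [hS.star_prod_map_cons_mul_prod_map_cons hi hj]
      split_ifs with hij
      · subst hij
        rw [List.prefix_cons_inj] at huv hvu
        exact ih hu' hv' huv hvu
      · rfl

theorem prod_map (hS : IsToeplitzCuntzFamily I S) {C : Set (List ι)}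
    (hCI : ∀ w ∈ C, ∀ x ∈ w, x ∈ I) (hC : IsAntichain (· <+: ·) C) :
    IsToeplitzCuntzFamily C fun w => (w.map S).prod where
  star_mul_eq_ite u hu v hv := by
    split_ifs with huv
    · subst huv
      exact hS.star_prod_map_mul_self (hCI u hu)
    · exact hS.star_prod_map_mul_eq_zero (hCI u hu) (hCI v hv) (hC hu hv huv)
        (hC hv hu (Ne.symm huv))

end MonoidWithZero

theorem sum_mul_star_mul [Semiring A] [StarMul A] {I : Finset ι} {S : ι → A}
    (hS : IsToeplitzCuntzFamily (I : Set ι) S) {j : ι} (hj : j ∈ I) :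
    (∑ i ∈ I, S i * star (S i)) * S j = S j := by
  calc (∑ i ∈ I, S i * star (S i)) * S j
      = ∑ i ∈ I, S i * (star (S i) * S j) := by simp only [Finset.sum_mul, mul_assoc]
    _ = ∑ i ∈ I, S i * if i = j then 1 else 0 :=
        Finset.sum_congr rfl fun i hi => by rw [hS.star_mul_eq_ite i hi j hj]
    _ = S j := by simp [hj]

end IsToeplitzCuntzFamily

theorem prefix_code_gives_cuntz_family_general [Semiring A] [StarMul A]
    {I : Finset ι} {S : ι → A} (hS : IsCuntzFamily_s4 I S) {C : Finset (List ι)}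
    (hCI : ∀ w ∈ C, ∀ x ∈ w, x ∈ I) (hC : IsAntichain (· <+: ·) (C : Set (List ι))) {k : ℕ}
    (hk : ∀ w : List ι, (∀ x ∈ w, x ∈ I) → w.length = k → ∃ u ∈ C, u <+: w) :
    IsCuntzFamily_s4 C fun w => (w.map S).prod := by
  have hSC : IsToeplitzCuntzFamily (C : Set (List ι)) fun w => (w.map S).prod :=
    hS.prod_map hCI hC
  refine ⟨hSC,
    eq_of_forall_mul_prod_map_eq_of_sum_mul_eq_one hS.sum_mul_star k fun w hw hwk => ?_⟩
  obtain ⟨u, hu, t, rfl⟩ := hk w hw hwk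
  rw [List.map_append, List.prod_append, ← mul_assoc, hSC.sum_mul_star_mul hu, one_mul]

end CuntzFamily

/-- A finite maximal prefix code `C` over the alphabet `{1, …, n}` yields, from a Cuntz family
`S 1, …, S n` of `n` isometries in a unital C*-algebra `A`, a Cuntz family `(S_w)_{w ∈ C}` of
`|C|` isometries, where `S_w` is the product of the `S i` along the word `w`. -/
theorem prefix_code_gives_cuntz_family
    {A : Type*} [CStarAlgebra A] (n : ℕ) (hn : 2 ≤ n)
    (C : Finset (List ℕ))
    (hne : ∀ w ∈ C, w ≠ [])
    (halph : ∀ w ∈ C, ∀ x ∈ w, x ∈ Finset.Icc 1 n)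
    (hpf : ∀ u ∈ C, ∀ v ∈ C, u <+: v → u = v)
    (hmax : ∀ w : List ℕ, (∀ x ∈ w, x ∈ Finset.Icc 1 n) →
      w.length = C.sup List.length → ∃ u ∈ C, u <+: w)
    (S : ℕ → A)
    (hS1 : ∀ i ∈ Finset.Icc 1 n, ∀ j ∈ Finset.Icc 1 n,
      star (S i) * S j = if i = j then 1 else 0)
    (hS2 : ∑ i ∈ Finset.Icc 1 n, S i * star (S i) = 1) :
    (∀ u ∈ C, ∀ v ∈ C,
      star ((u.map S).prod) * (v.map S).prod = if u = v then 1 else 0) ∧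
    ∑ w ∈ C, (w.map S).prod * star ((w.map S).prod) = 1 := by
  have hC : IsAntichain (· <+: ·) (C : Set (List ℕ)) :=
    fun u hu v hv huv huv' => huv (hpf u hu v hv huv')
  have hSC := prefix_code_gives_cuntz_family_general ⟨⟨hS1⟩, hS2⟩ halph hC hmax
  exact ⟨hSC.star_mul_eq_ite, hSC.sum_mul_star⟩
end

section
/- (Main theorem, relations form: existence.) Let p, q ≥ 2 and k, s ≥ 1 be integers with (p−1)k = (q−1)s. Let A be a unital C*-algebra containing a Cuntz family of q isometries. Then the matrix algebra M_k(A) contains a Cuntz family of p isometries, i.e., there exist U_1, …, U_p ∈ M_k(A) with U_a* U_b = δ_{ab}·1_{M_k(A)} for all a, b and ∑_{a=1}^p U_a U_a* = 1_{M_k(A)}. -/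
/-!
A Cuntz family of `q` isometries is a unitary `1 × q` matrix, so it identifies the free Hilbert
modules `R` and `R^q`. Replacing one summand of `R^k` by `R^q` raises the rank by `q - 1`; doing
this `s` times gives a unitary from `R^(k + (q - 1) s) = R^(pk)` onto `R^k`, that is, a unitary
`k × pk` matrix. Its `p` square blocks are the required isometries in `M_k(R)`.
-/

open Matrix
open scoped Finset

/-- A Cuntz family in the star semiring `R`: isometries `S i`, for `i` in the finite set `I`, with
orthogonal ranges that add up to `1`. The index set is a `Finset` and not a type, so that families
such as `S 1, …, S q` are covered; the values of `S` outside `I` are irrelevant. -/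
structure IsCuntzFamilyOn {R ι : Type*} [Semiring R] [StarRing R] [DecidableEq ι]
    (I : Finset ι) (S : ι → R) : Prop where
  star_mul : ∀ i ∈ I, ∀ j ∈ I, star (S i) * S j = if i = j then 1 else 0
  sum_mul_star : ∑ i ∈ I, S i * star (S i) = 1

/-- Unitary equivalence of the free Hilbert modules `R^m` and `R^n`, encoded by a rectangular
unitary matrix. It allows ranks to be compared by changing one summand at a time. -/
def FreeUnitarilyEquivalent (R m n : Type*) [Semiring R] [StarRing R] [Fintype m] [Fintype n]
    [DecidableEq m] [DecidableEq n] : Prop :=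
  ∃ V : Matrix m n R, V * Vᴴ = 1 ∧ Vᴴ * V = 1

namespace FreeUnitarilyEquivalent

variable {R l m n m' n' ι κ : Type*} [Semiring R] [StarRing R]
  [Fintype l] [Fintype m] [Fintype n] [Fintype m'] [Fintype n'] [Fintype ι]
  [DecidableEq l] [DecidableEq m] [DecidableEq n] [DecidableEq m'] [DecidableEq n']
  [DecidableEq ι] [DecidableEq κ]

theorem of_equiv (e : m ≃ n) : FreeUnitarilyEquivalent R m n := by
  refine ⟨(1 : Matrix m m R).submatrix id e.symm, ?_, ?_⟩
  · rw [conjTranspose_submatrix, submatrix_mul_equiv]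
    simp
  · rw [conjTranspose_submatrix, ← submatrix_mul _ _ _ _ _ Function.bijective_id]
    simp

theorem of_card_eq (h : Fintype.card m = Fintype.card n) : FreeUnitarilyEquivalent R m n :=
  of_equiv (Fintype.equivOfCardEq h)

theorem trans (hlm : FreeUnitarilyEquivalent R l m) (hmn : FreeUnitarilyEquivalent R m n) :
    FreeUnitarilyEquivalent R l n := by
  obtain ⟨V, hV, hV'⟩ := hlm
  obtain ⟨W, hW, hW'⟩ := hmn
  refine ⟨V * W, ?_, ?_⟩
  · rw [conjTranspose_mul, Matrix.mul_assoc, ← Matrix.mul_assoc W, hW, Matrix.one_mul, hV]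
  · rw [conjTranspose_mul, Matrix.mul_assoc, ← Matrix.mul_assoc Vᴴ, hV', Matrix.one_mul, hW']

theorem sum (h : FreeUnitarilyEquivalent R m n) (h' : FreeUnitarilyEquivalent R m' n') :
    FreeUnitarilyEquivalent R (m ⊕ m') (n ⊕ n') := by
  obtain ⟨V, hV, hV'⟩ := h
  obtain ⟨W, hW, hW'⟩ := h'
  refine ⟨fromBlocks V 0 0 W, ?_, ?_⟩
  · simp [fromBlocks_conjTranspose, fromBlocks_multiply, hV, hW]
  · simp [fromBlocks_conjTranspose, fromBlocks_multiply, hV', hW']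

theorem of_card_add_eq_card_add_one (h : FreeUnitarilyEquivalent R Unit ι) [Nonempty m]
    (hcard : Fintype.card m + Fintype.card ι = Fintype.card n + 1) :
    FreeUnitarilyEquivalent R m n := by
  obtain ⟨c, hc⟩ : ∃ c, Fintype.card m = c + 1 :=
    Nat.exists_eq_succ_of_ne_zero Fintype.card_ne_zero
  have split_off : FreeUnitarilyEquivalent R m (Unit ⊕ Fin c) := of_card_eq (by simp; omega)
  have replace_summand : FreeUnitarilyEquivalent R (Unit ⊕ Fin c) (ι ⊕ Fin c) :=
    h.sum (of_equiv (Equiv.refl _))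
  have regroup : FreeUnitarilyEquivalent R (ι ⊕ Fin c) n := of_card_eq (by simp; omega)
  exact (split_off.trans replace_summand).trans regroup

theorem of_card_eq_card_add_mul [Nonempty ι] (h : FreeUnitarilyEquivalent R Unit ι)
    [Nonempty m] (s : ℕ)
    (hcard : Fintype.card n = Fintype.card m + (Fintype.card ι - 1) * s) :
    FreeUnitarilyEquivalent R m n := by
  have hι : 0 < Fintype.card ι := Fintype.card_pos
  have hm : 0 < Fintype.card m := Fintype.card_pos
  have grow : ∀ t : ℕ,
      FreeUnitarilyEquivalent R m (Fin (Fintype.card m + (Fintype.card ι - 1) * t)) := by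
    intro t
    induction t with
    | zero => exact of_card_eq (by simp)
    | succ t ih =>
      have : Nonempty (Fin (Fintype.card m + (Fintype.card ι - 1) * t)) := ⟨⟨0, by omega⟩⟩
      refine ih.trans (h.of_card_add_eq_card_add_one ?_)
      rw [Fintype.card_fin, Fintype.card_fin, Nat.mul_succ]
      omega
  exact (grow s).trans (of_card_eq (by simp [hcard]))

theorem exists_isCuntzFamilyOn {J : Finset κ} (h : FreeUnitarilyEquivalent R n (J × n)) :
    ∃ U : κ → Matrix n n R, IsCuntzFamilyOn J U := by
  obtain ⟨V, hV, hV'⟩ := h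
  obtain ⟨U, hU⟩ : ∃ U : κ → Matrix n n R, ∀ a : J, U a = V.submatrix id (Prod.mk a) :=
    ⟨Function.extend Subtype.val (fun a : J => V.submatrix id (Prod.mk a)) 0,
      Subtype.val_injective.extend_apply _ _⟩
  refine ⟨U, fun a ha b hb => ?_, ?_⟩
  · have block : star (U a) * U b = (Vᴴ * V).submatrix (Prod.mk ⟨a, ha⟩) (Prod.mk ⟨b, hb⟩) := by
      rw [hU ⟨a, ha⟩, hU ⟨b, hb⟩, star_eq_conjTranspose, conjTranspose_submatrix,
        ← submatrix_mul _ _ _ _ _ Function.bijective_id]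
    rw [block, hV']
    ext i j
    by_cases hab : a = b <;> simp [Matrix.one_apply, hab]
  · rw [← hV, ← Finset.sum_coe_sort J]
    ext i j
    simp [hU, star_eq_conjTranspose, Matrix.mul_apply, Matrix.sum_apply, Fintype.sum_prod_type]

end FreeUnitarilyEquivalent

theorem IsCuntzFamilyOn.freeUnitarilyEquivalent {R ι : Type*} [Semiring R] [StarRing R]
    [DecidableEq ι] {I : Finset ι} {S : ι → R} (hS : IsCuntzFamilyOn I S) :
    FreeUnitarilyEquivalent R Unit I := by
  refine ⟨replicateRow Unit fun i : I => S i, ?_, ?_⟩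
  · ext
    simpa [Matrix.mul_apply] using (I.sum_coe_sort fun i => S i * star (S i)).trans hS.sum_mul_star
  · ext i j
    simpa [Matrix.mul_apply, Matrix.one_apply, Subtype.val_inj] using hS.star_mul i i.2 j j.2

theorem matrix_algebra_contains_cuntz_family_general {R ι κ n : Type*} [Semiring R] [StarRing R]
    [DecidableEq ι] [DecidableEq κ] [Fintype n] [DecidableEq n] [Nonempty n]
    {I : Finset ι} {J : Finset κ} (hI : I.Nonempty) (hJ : J.Nonempty)
    (hdvd : #I - 1 ∣ (#J - 1) * Fintype.card n) {S : ι → R} (hS : IsCuntzFamilyOn I S) :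
    ∃ U : κ → Matrix n n R, IsCuntzFamilyOn J U := by
  obtain ⟨s, hs⟩ := hdvd
  have : Nonempty I := hI.to_subtype
  have hrank : Fintype.card (J × n) = Fintype.card n + (Fintype.card I - 1) * s := calc
    Fintype.card (J × n) = #J * Fintype.card n := by simp
    _ = (1 + (#J - 1)) * Fintype.card n := by rw [Nat.add_sub_cancel' hJ.card_pos]
    _ = Fintype.card n + (Fintype.card I - 1) * s := by
      rw [Nat.add_mul, Nat.one_mul, hs, Fintype.card_coe]
  exact (hS.freeUnitarilyEquivalent.of_card_eq_card_add_mul s hrank).exists_isCuntzFamilyOn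

/-- Main theorem, relations form (existence): if `(p-1)k = (q-1)s` with `p, q ≥ 2` and
`k, s ≥ 1`, and the unital C*-algebra `A` contains a Cuntz family of `q` isometries, then
`M_k(A)` contains a Cuntz family of `p` isometries. -/
theorem matrix_algebra_contains_cuntz_family
    {A : Type*} [CStarAlgebra A] (p q k s : ℕ)
    (hp : 2 ≤ p) (hq : 2 ≤ q) (hk : 1 ≤ k) (hs : 1 ≤ s)
    (hcong : (p - 1) * k = (q - 1) * s)
    (S : ℕ → A)
    (hS1 : ∀ i ∈ Finset.Icc 1 q, ∀ j ∈ Finset.Icc 1 q,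
      star (S i) * S j = if i = j then 1 else 0)
    (hS2 : ∑ i ∈ Finset.Icc 1 q, S i * star (S i) = 1) :
    ∃ U : ℕ → Matrix (Fin k) (Fin k) A,
      (∀ a ∈ Finset.Icc 1 p, ∀ b ∈ Finset.Icc 1 p,
        star (U a) * U b = if a = b then 1 else 0) ∧
      ∑ a ∈ Finset.Icc 1 p, U a * star (U a) = 1 := by
  have : Nonempty (Fin k) := ⟨⟨0, hk⟩⟩
  obtain ⟨U, hU⟩ := matrix_algebra_contains_cuntz_family_general (n := Fin k)
    (Finset.nonempty_Icc.2 (by omega : 1 ≤ q)) (Finset.nonempty_Icc.2 (by omega : 1 ≤ p))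
    (by simpa using Dvd.intro s hcong.symm) ⟨hS1, hS2⟩
  exact ⟨U, hU.star_mul, hU.sum_mul_star⟩
end

section
/- (Target-bijectivity of the collapsing map g: F_{m,n} → E_n.) Let n ≥ 2, k ≥ 1, m := (n−1)k + 1, and let F_{m,n} be the graph with vertices v_1, …, v_k, line edges l_j: v_j → v_{j+1} (1 ≤ j ≤ k−1), and edges e_1, …, e_m with source v_k, where e_i has target v_{c(i)} with c(i) := k − ⌊(i−1)/(n−1)⌋ for i ≤ m−1 and c(m) := 1. Partition the nk edges of F_{m,n} into n classes: for 1 ≤ a ≤ n−1, class C_a := { e_{(n−1)(k−1−j)+a} : 0 ≤ j ≤ k−1 }, and class C_n := { l_1, …, l_{k−1}, e_m }. Then each class has exactly k edges, and within each class the targets of the edges are pairwise distinct and exhaust all k vertices; i.e., the map sending each edge of C_a to its target is a bijection from C_a onto {v_1, …, v_k} for every a ∈ {1, …, n}. -/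
/-- The index of the `j`-th edge of the class `C_a`, where `d = n - 1` and `1 ≤ a ≤ d`. The paper's
range `0 ≤ j ≤ k - 1` is the one where no subtraction is truncated. -/
def classEdge (d k a j : ℕ) : ℕ :=
  d * (k - 1 - j) + a

/-- The index `c i` of the target of the edge `e_i`, where `d = n - 1`. This excludes the last edge
`e_m`: the range is `1 ≤ i ≤ d * k = m - 1`, where no subtraction is truncated. -/
def edgeTarget (d k i : ℕ) : ℕ :=
  k - (i - 1) / d

/-- The cyclic successor on `{1, …, k}`. It is the target map of the class `C_n`, with `j < k`
standing for the line edge `l_j` and `k` for the edge `e_m`. -/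
def cyclicSucc (k j : ℕ) : ℕ :=
  if j = k then 1 else j + 1

theorem mul_add_sub_one_div {d a : ℕ} (q : ℕ) (ha : 1 ≤ a) (had : a ≤ d) :
    (d * q + a - 1) / d = q := by
  rw [Nat.add_sub_assoc ha, Nat.mul_add_div (by lia), Nat.div_eq_of_lt (by lia), add_zero]

theorem classEdge_le {d k a j : ℕ} (had : a ≤ d) (hj : j < k) : classEdge d k a j ≤ d * k :=
  calc d * (k - 1 - j) + a
    _ ≤ d * (k - 1 - j) + d := by gcongr
    _ = d * (k - 1 - j + 1) := (Nat.mul_succ _ _).symm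
    _ ≤ d * k := by gcongr; lia

theorem edgeTarget_classEdge {d k a j : ℕ} (ha : 1 ≤ a) (had : a ≤ d) (hj : j < k) :
    edgeTarget d k (classEdge d k a j) = j + 1 := by
  rw [edgeTarget, classEdge, mul_add_sub_one_div _ ha had]
  lia

theorem bijOn_add_one_range (k : ℕ) :
    Set.BijOn (· + 1) (Finset.range k : Set ℕ) (Finset.Icc 1 k) := by
  rw [← Finset.image_eq_iff_bijOn_of_card (by simp), Finset.range_eq_Ico,
    Finset.image_add_right_Ico, zero_add, Finset.Ico_add_one_right_eq_Icc]

theorem bijOn_edgeTarget_classEdge {d a : ℕ} (k : ℕ) (ha : 1 ≤ a) (had : a ≤ d) :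
    Set.BijOn (edgeTarget d k ∘ classEdge d k a) (Finset.range k : Set ℕ) (Finset.Icc 1 k) :=
  (bijOn_add_one_range k).congr fun _ hj ↦
    (edgeTarget_classEdge ha had (Finset.mem_range.mp hj)).symm

theorem bijOn_cyclicSucc (k : ℕ) :
    Set.BijOn (cyclicSucc k) (Finset.Icc 1 k : Set ℕ) (Finset.Icc 1 k) := by
  have mapsTo : Set.MapsTo (cyclicSucc k) (Finset.Icc 1 k : Set ℕ) (Finset.Icc 1 k) := by
    intro j hj
    simp only [SetLike.mem_coe, Finset.mem_Icc, cyclicSucc] at hj ⊢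
    split_ifs <;> lia
  have injOn : Set.InjOn (cyclicSucc k) (Finset.Icc 1 k : Set ℕ) := by
    intro i hi j hj h
    simp only [SetLike.mem_coe, Finset.mem_Icc, cyclicSucc] at hi hj h
    split_ifs at h <;> lia
  exact ⟨mapsTo, injOn, Finset.surjOn_of_injOn_of_card_le _ mapsTo injOn le_rfl⟩

/-- Target-bijectivity of the collapsing map `g : F_{m,n} → E_n`.  With `m = (n-1)k + 1` and
`c i = k - ⌊(i-1)/(n-1)⌋` for `i ≤ m-1`, `c m = 1`, partition the `nk` edges of `F_{m,n}` into
`n` classes: for `1 ≤ a ≤ n-1`, `C_a = {e_{(n-1)(k-1-j)+a} : 0 ≤ j ≤ k-1}`, and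
`C_n = {l_1, …, l_{k-1}, e_m}` (the line edge `l_j` has target `v_{j+1}` and `e_m` has target
`v_1`; below `C_n` is indexed by `j ∈ {1, …, k}`, with index `k` standing for `e_m`).
Then each class has exactly `k` edges, and within each class the targets of the edges are
pairwise distinct and exhaust all `k` vertices. -/
theorem Fmn_collapsing_target_bijective
    (n k m : ℕ) (hn : 2 ≤ n) (hk : 1 ≤ k) (hm : m = (n - 1) * k + 1)
    (c : ℕ → ℕ)
    (hc : ∀ i, 1 ≤ i → i ≤ m - 1 → c i = k - (i - 1) / (n - 1))
    (hcm : c m = 1) :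
    -- the classes `C_a`, `1 ≤ a ≤ n-1`
    (∀ a, 1 ≤ a → a ≤ n - 1 →
      -- `C_a` has exactly `k` (distinct) edges
      ((Finset.range k).image (fun j => (n - 1) * (k - 1 - j) + a)).card = k ∧
      -- within `C_a` the targets are pairwise distinct
      (∀ j1 ∈ Finset.range k, ∀ j2 ∈ Finset.range k,
        c ((n - 1) * (k - 1 - j1) + a) = c ((n - 1) * (k - 1 - j2) + a) → j1 = j2) ∧
      -- and the targets exhaust all `k` vertices
      (Finset.range k).image (fun j => c ((n - 1) * (k - 1 - j) + a)) = Finset.Icc 1 k) ∧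
    -- the class `C_n = {l_1, …, l_{k-1}, e_m}`, indexed by `{1, …, k}` with `k ↦ e_m`:
    -- it has exactly `k` edges
    (Finset.Icc 1 k).card = k ∧
    -- within `C_n` the targets (`l_j ↦ j+1`, `e_m ↦ 1`) are pairwise distinct
    (∀ j1 ∈ Finset.Icc 1 k, ∀ j2 ∈ Finset.Icc 1 k,
      (if j1 = k then 1 else j1 + 1) = (if j2 = k then 1 else j2 + 1) → j1 = j2) ∧
    -- and the targets exhaust all `k` vertices
    (Finset.Icc 1 k).image (fun j => if j = k then 1 else j + 1) = Finset.Icc 1 k := by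
  have class_bijOn (a : ℕ) (ha : 1 ≤ a) (han : a ≤ n - 1) :
      Set.BijOn (c ∘ classEdge (n - 1) k a) (Finset.range k : Set ℕ) (Finset.Icc 1 k) := by
    refine (bijOn_edgeTarget_classEdge k ha han).congr fun j hj ↦ (hc _ ?_ ?_).symm
    · exact ha.trans (Nat.le_add_left a _)
    · simpa [hm] using classEdge_le han (Finset.mem_range.mp hj)
  refine ⟨fun a ha han ↦ ?_, Nat.card_Icc 1 k, (bijOn_cyclicSucc k).injOn,
    (Finset.image_eq_iff_bijOn_of_card le_rfl).mpr (bijOn_cyclicSucc k)⟩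
  obtain ⟨mapsTo, injOn, surjOn⟩ := class_bijOn a ha han
  have card_class : ((Finset.range k).image (classEdge (n - 1) k a)).card = k := by
    rw [Finset.card_image_of_injOn injOn.of_comp, Finset.card_range]
  exact ⟨card_class, injOn, Finset.image_eq_iff_surjOn_mapsTo.mpr ⟨surjOn, mapsTo⟩⟩
end
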